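/- arXiv:2106.10473 — 5 statements merged into one kernel-verified Lean document; each statement's English description precedes it below -/
import Mathlib

section
/- Fix prices p ∈ [0,1] and q = αp with α ∈ [0,1]. For the revenue function R(p,q,M) = (1−α)·p·I(M), where I(M) is the total improvement of social visibility of all participating requesters when the set of participating suppliers is M, the map M ↦ R(p,q,M) is monotone nondecreasing and submodular: for all supplier sets A ⊆ B and any supplier u ∉ B, R(p,q,A) ≤ R(p,q,B) and R(p,q,A∪{u}) − R(p,q,A) ≥ R(p,q,B∪{u}) − R(p,q,B). -/
/-- `walkLen E n v u` : there is a directed walk of exactly `n` edges from `v` to `u`. -/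
def walkLen {U : Type*} (E : U → U → Prop) : ℕ → U → U → Prop
  | 0, v, u => v = u
  | n + 1, v, u => ∃ w, E v w ∧ walkLen E n w u

/-- Directed distance from `v` to `u` (`+∞` if `u` is not reachable from `v`). -/
noncomputable def graphDist {U : Type*} (E : U → U → Prop) (v u : U) : ℕ∞ :=
  sInf {n : ℕ∞ | ∃ m : ℕ, (m : ℕ∞) = n ∧ walkLen E m v u}

/-- The `d`-visible set of `u` : all `v` with `D(v,u;G) ≤ d`. -/
noncomputable def visSet {U : Type*} (E : U → U → Prop) (u : U) (d : ℕ) : Set U :=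
  {v | graphDist E v u ≤ (d : ℕ∞)}

/-- Edge relation of `G̃(M) = (U, E ∪ (M × R̃))`: the graph obtained from `G` by adding an
edge from each supplier in `M` to each requester in `R̃`. -/
def newE {U : Type*} (E : U → U → Prop) (Rt M : Finset U) : U → U → Prop :=
  fun a b => E a b ∨ (a ∈ M ∧ b ∈ Rt)

/-- `I_r(M) = |V(r,τ;G̃(M)) \ V(r,τ;G)|`, the improvement of social visibility of
requester `r` when the set of participating suppliers is `M`. -/
noncomputable def improvement {U : Type*} (E : U → U → Prop) (τ : ℕ) (Rt : Finset U)
    (r : U) (M : Finset U) : ℕ :=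
  ((visSet (newE E Rt M) r τ) \ (visSet E r τ)).ncard

/-- `I(M) = Σ_{r ∈ R̃} I_r(M)`, the total improvement of social visibility of all
participating requesters. -/
noncomputable def totalImprovement {U : Type*} (E : U → U → Prop) (τ : ℕ)
    (Rt : Finset U) (M : Finset U) : ℕ :=
  ∑ r ∈ Rt, improvement E τ Rt r M

/-!
A walk to a requester in `G̃(M)` either uses only edges of `G` or, cut at its first new edge,
begins with a strictly shorter walk of `G` ending at a supplier. Hence what a requester `r` gains
from `M` is the union over `m ∈ M` of the sets `{v | D(v, m; G) < τ} \ V(r, τ; G)`, none of which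
depends on `M`. The improvement is therefore a coverage function of `M`, and revenue is a
nonnegative combination of coverage functions.
-/

section Coverage

variable {ι β : Type*} {S : ι → Set β}

/-- The coverage function of a family of sets `S`: the number of points lying in some `S i` with
`i ∈ M`. It uses `Set.ncard`, so it is meaningful only when that union is finite. -/
noncomputable def coverage (S : ι → Set β) (M : Finset ι) : ℕ :=
  (⋃ i ∈ M, S i).ncard

theorem coverage_mono (hS : ∀ i, (S i).Finite) : Monotone (coverage S) := fun _ B hAB =>
  Set.ncard_le_ncard (Set.biUnion_subset_biUnion_left hAB)
    (B.finite_toSet.biUnion fun i _ => hS i)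

theorem coverage_union_add_le [DecidableEq ι] (hS : ∀ i, (S i).Finite) {A B : Finset ι}
    (hAB : A ⊆ B) (C : Finset ι) :
    coverage S (B ∪ C) + coverage S A ≤ coverage S (A ∪ C) + coverage S B := by
  have hfin (M : Finset ι) : (⋃ i ∈ M, S i).Finite := M.finite_toSet.biUnion fun i _ => hS i
  have hunion : (⋃ i ∈ A ∪ C, S i) ∪ ⋃ i ∈ B, S i = ⋃ i ∈ B ∪ C, S i := by
    rw [← Finset.set_biUnion_union, Finset.union_right_comm, Finset.union_eq_right.mpr hAB]
  have hinter : ⋃ i ∈ A, S i ⊆ (⋃ i ∈ A ∪ C, S i) ∩ ⋃ i ∈ B, S i :=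
    Set.subset_inter (Set.biUnion_subset_biUnion_left Finset.subset_union_left)
      (Set.biUnion_subset_biUnion_left hAB)
  calc coverage S (B ∪ C) + coverage S A
      ≤ ((⋃ i ∈ A ∪ C, S i) ∪ ⋃ i ∈ B, S i).ncard +
          ((⋃ i ∈ A ∪ C, S i) ∩ ⋃ i ∈ B, S i).ncard := by
        rw [hunion]
        exact Nat.add_le_add_left (Set.ncard_le_ncard hinter ((hfin B).inter_of_right _)) _
    _ = coverage S (A ∪ C) + coverage S B :=
        Set.ncard_union_add_ncard_inter _ _ (hfin _) (hfin _)

end Coverage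

section Walks

variable {U : Type*} {E F : U → U → Prop} {Rt M : Finset U} {n : ℕ} {u v w : U}

theorem walkLen.mono (hEF : ∀ a b, E a b → F a b) (h : walkLen E n v u) : walkLen F n v u := by
  induction n generalizing v with
  | zero => exact h
  | succ n ih =>
    obtain ⟨x, hvx, hxu⟩ := h
    exact ⟨x, hEF _ _ hvx, ih hxu⟩

theorem walkLen.concat (h : walkLen E n v w) (hwu : E w u) : walkLen E (n + 1) v u := by
  induction n generalizing v with
  | zero =>
    obtain rfl : v = w := h
    exact ⟨u, hwu, rfl⟩
  | succ n ih =>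
    obtain ⟨x, hvx, hxw⟩ := h
    exact ⟨x, hvx, ih hxw⟩

theorem walkLen.or_exists_supplier_of_newE (h : walkLen (newE E Rt M) n v u) :
    walkLen E n v u ∨ ∃ m ∈ M, ∃ k < n, walkLen E k v m := by
  induction n generalizing v with
  | zero => exact Or.inl h
  | succ n ih =>
    obtain ⟨x, hvx | ⟨hvM, -⟩, hxu⟩ := h
    · rcases ih hxu with hxu | ⟨m, hm, k, hk, hxm⟩
      · exact Or.inl ⟨x, hvx, hxu⟩
      · exact Or.inr ⟨m, hm, k + 1, Nat.succ_lt_succ hk, x, hvx, hxm⟩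
    · exact Or.inr ⟨v, hvM, 0, n.succ_pos, rfl⟩

end Walks

section Visibility

variable {U : Type*} {E : U → U → Prop} {Rt : Finset U} {d τ : ℕ} {r u v : U}

/-- The nodes at directed distance strictly less than `d` to `u`. For `d = τ` these are the nodes
that an edge from `u` to a requester brings within distance `τ` of that requester. -/
def strictVisSet (E : U → U → Prop) (u : U) (d : ℕ) : Set U :=
  {v | graphDist E v u < d}

theorem mem_strictVisSet : v ∈ strictVisSet E u d ↔ ∃ k < d, walkLen E k v u := by
  simp [strictVisSet, graphDist, sInf_lt_iff, and_comm]

theorem visSet_eq_strictVisSet_succ (E : U → U → Prop) (u : U) (d : ℕ) :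
    visSet E u d = strictVisSet E u (d + 1) :=
  Set.ext fun _ => ENat.lt_natCast_add_one_iff.symm

theorem mem_visSet : v ∈ visSet E u d ↔ ∃ k ≤ d, walkLen E k v u := by
  simp only [visSet_eq_strictVisSet_succ, mem_strictVisSet, Nat.lt_succ_iff]

theorem visSet_newE (E : U → U → Prop) (τ : ℕ) (hr : r ∈ Rt) (M : Finset U) :
    visSet (newE E Rt M) r τ = visSet E r τ ∪ ⋃ m ∈ M, strictVisSet E m τ := by
  ext v
  simp only [Set.mem_union, Set.mem_iUnion₂, mem_visSet, mem_strictVisSet, exists_prop]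
  constructor
  · rintro ⟨n, hn, hvr⟩
    rcases hvr.or_exists_supplier_of_newE with hvr | ⟨m, hm, k, hk, hvm⟩
    · exact Or.inl ⟨n, hn, hvr⟩
    · exact Or.inr ⟨m, hm, k, hk.trans_le hn, hvm⟩
  · rintro (⟨n, hn, hvr⟩ | ⟨m, hm, k, hk, hvm⟩)
    · exact ⟨n, hn, hvr.mono fun _ _ => Or.inl⟩
    · exact ⟨k + 1, hk, (hvm.mono fun _ _ => Or.inl).concat (Or.inr ⟨hm, hr⟩)⟩

theorem improvement_eq_coverage (E : U → U → Prop) (τ : ℕ) (hr : r ∈ Rt) (M : Finset U) :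
    improvement E τ Rt r M = coverage (fun m => strictVisSet E m τ \ visSet E r τ) M := by
  simp only [improvement, coverage, visSet_newE E τ hr, Set.union_sdiff_left, Set.iUnion_sdiff]

theorem totalImprovement_mono (hfin : ∀ m, (strictVisSet E m τ).Finite) (Rt : Finset U) :
    Monotone (totalImprovement E τ Rt) := fun A B hAB =>
  Finset.sum_le_sum fun r hr => by
    simp only [improvement_eq_coverage E τ hr]
    exact coverage_mono (fun m => (hfin m).sdiff) hAB

theorem totalImprovement_union_add_le [DecidableEq U]
    (hfin : ∀ m, (strictVisSet E m τ).Finite) (Rt : Finset U) {A B : Finset U} (hAB : A ⊆ B)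
    (C : Finset U) :
    totalImprovement E τ Rt (B ∪ C) + totalImprovement E τ Rt A ≤
      totalImprovement E τ Rt (A ∪ C) + totalImprovement E τ Rt B := by
  simp only [totalImprovement, ← Finset.sum_add_distrib]
  refine Finset.sum_le_sum fun r hr => ?_
  simp only [improvement_eq_coverage E τ hr]
  exact coverage_union_add_le (fun m => (hfin m).sdiff) hAB C

end Visibility

theorem revenue_monotone_submodular_general {U : Type*} [DecidableEq U] {E : U → U → Prop} {τ : ℕ}
    (hfin : ∀ m, (strictVisSet E m τ).Finite) (Rt : Finset U) {p α : ℝ} (hp : 0 ≤ p) (hα : α ≤ 1)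
    {Rev : Finset U → ℝ}
    (hRev : ∀ M : Finset U, Rev M = (1 - α) * p * (totalImprovement E τ Rt M : ℝ))
    {A B : Finset U} (hAB : A ⊆ B) (C : Finset U) :
    Rev A ≤ Rev B ∧ Rev (A ∪ C) - Rev A ≥ Rev (B ∪ C) - Rev B := by
  have hc : 0 ≤ (1 - α) * p := mul_nonneg (sub_nonneg.mpr hα) hp
  have hmono : (totalImprovement E τ Rt A : ℝ) ≤ totalImprovement E τ Rt B :=
    mod_cast totalImprovement_mono hfin Rt hAB
  have hsub : (totalImprovement E τ Rt (B ∪ C) : ℝ) + totalImprovement E τ Rt A ≤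
      totalImprovement E τ Rt (A ∪ C) + totalImprovement E τ Rt B :=
    mod_cast totalImprovement_union_add_le hfin Rt hAB C
  simp only [hRev, ← mul_sub, ge_iff_le]
  exact ⟨mul_le_mul_of_nonneg_left hmono hc, mul_le_mul_of_nonneg_left (by linarith) hc⟩

/-- with fixed prices `p ∈ [0,1]` and `q = α·p`, `α ∈ [0,1]`, the revenue
`R(p,q,M) = (1-α)·p·I(M)` is monotone nondecreasing and submodular in the supplier set. -/
theorem revenue_monotone_submodular
    {U : Type*} [Fintype U] [DecidableEq U] (E : U → U → Prop)
    (hNoLoop : ∀ u : U, ¬ E u u) (τ : ℕ) (Rt : Finset U)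
    (p q α : ℝ) (hp : p ∈ Set.Icc (0 : ℝ) 1) (hα : α ∈ Set.Icc (0 : ℝ) 1)
    (hq : q = α * p)
    (Rev : Finset U → ℝ)
    (hRev : ∀ M : Finset U, Rev M = (1 - α) * p * (totalImprovement E τ Rt M : ℝ))
    (A B : Finset U) (hAB : A ⊆ B) (u : U) (hu : u ∉ B) :
    Rev A ≤ Rev B ∧ Rev (A ∪ {u}) - Rev A ≥ Rev (B ∪ {u}) - Rev B := by
  exact revenue_monotone_submodular_general (fun _ => Set.toFinite _) Rt hp.1 hα.2 hRev hAB {u}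
end

section
/- The greedy algorithm for maximizing a monotone submodular function under a cardinality constraint achieves a (1 − 1/e)-approximation: let S be a finite ground set, let f be a monotone nondecreasing submodular set function on subsets of S with f(∅) = 0, and let b ∈ ℕ with b ≥ 1. Define the greedy sets M_0 = ∅ and, for t = 1,…,b, M_t = M_{t−1} ∪ {u_t} where u_t ∈ S maximizes f(M_{t−1} ∪ {u}) − f(M_{t−1}) over u ∈ S. Then f(M_b) ≥ (1 − 1/e) · max{ f(M) : M ⊆ S, |M| ≤ b }. -/
/-!
By submodularity, adding all of a set `T` with at most `k` elements to the current set `A` gains at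
most the sum of the `#T` single-element gains over `A`, hence at most `k` times the gain of a greedy
step. So each greedy step closes at least a fraction `1 / k` of the gap `f T - f A`, and `n` of them
shrink it by a factor of at most `(1 - 1 / k) ^ n ≤ exp (-(n / k))`.
-/

open Finset Real

section OrderedGroup

variable {ι R : Type*} [DecidableEq ι]

/-- Submodular set functions on the finite subsets of `ι`, encoded as diminishing returns: an
element contributes no more to a set than to any of its subsets. -/
def IsSubmodular [Sub R] [LE R] (f : Finset ι → R) : Prop :=
  ∀ ⦃A B : Finset ι⦄, A ⊆ B → ∀ ⦃u : ι⦄, u ∉ B → f (insert u B) - f B ≤ f (insert u A) - f A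

/-- One step of the greedy algorithm: `B` arises from `A` by adding an element that maximizes the
value of `f`. The element may already lie in `A`, so that a step is possible even when `A` is the
whole ground set. -/
def IsGreedyStep [LE R] (f : Finset ι → R) (A B : Finset ι) : Prop :=
  ∃ u, B = insert u A ∧ ∀ v, f (insert v A) ≤ f (insert u A)

theorem IsGreedyStep.le_of_monotone [Preorder R] {f : Finset ι → R} {A B : Finset ι}
    (h : IsGreedyStep f A B) (hmono : Monotone f) : f A ≤ f B := by
  obtain ⟨u, rfl, -⟩ := h
  exact hmono (subset_insert u A)

variable [AddCommGroup R] [PartialOrder R] [IsOrderedAddMonoid R] {f : Finset ι → R}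

theorem IsSubmodular.union_sub_le_sum (hsub : IsSubmodular f) (A T : Finset ι) :
    f (A ∪ T) - f A ≤ ∑ v ∈ T, (f (insert v A) - f A) := by
  induction T using Finset.induction_on with
  | empty => simp
  | insert v T hvT ih =>
    rw [sum_insert hvT, union_insert]
    by_cases hvA : v ∈ A
    · simpa [hvA] using ih
    · have hv : v ∉ A ∪ T := by simp [hvA, hvT]
      calc f (insert v (A ∪ T)) - f A
          = (f (insert v (A ∪ T)) - f (A ∪ T)) + (f (A ∪ T) - f A) := by abel
        _ ≤ (f (insert v A) - f A) + ∑ v ∈ T, (f (insert v A) - f A) :=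
          add_le_add (hsub subset_union_left hv) ih

theorem IsGreedyStep.sub_le_nsmul {A B T : Finset ι} {k : ℕ} (h : IsGreedyStep f A B)
    (hmono : Monotone f) (hsub : IsSubmodular f) (hT : #T ≤ k) :
    f T - f A ≤ k • (f B - f A) := by
  have hgain : ∀ v ∈ T, f (insert v A) - f A ≤ f B - f A := by
    obtain ⟨u, rfl, hmax⟩ := h
    exact fun v _ ↦ sub_le_sub_right (hmax v) _
  calc f T - f A ≤ f (A ∪ T) - f A := sub_le_sub_right (hmono subset_union_right) _
    _ ≤ ∑ v ∈ T, (f (insert v A) - f A) := hsub.union_sub_le_sum A T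
    _ ≤ #T • (f B - f A) := sum_le_card_nsmul _ _ _ hgain
    _ ≤ k • (f B - f A) := nsmul_le_nsmul_left (sub_nonneg.2 (h.le_of_monotone hmono)) hT

end OrderedGroup

theorem IsGreedyStep.sub_le_one_sub_inv_mul_sub {ι K : Type*} [DecidableEq ι] [Field K]
    [LinearOrder K] [IsStrictOrderedRing K] {f : Finset ι → K} {A B T : Finset ι} {k : ℕ}
    (h : IsGreedyStep f A B) (hmono : Monotone f) (hsub : IsSubmodular f) (hk : 0 < k)
    (hT : #T ≤ k) : f T - f B ≤ (1 - (k : K)⁻¹) * (f T - f A) := by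
  have hgain : (f T - f A) / k ≤ f B - f A := by
    rw [div_le_iff₀' (Nat.cast_pos.2 hk), ← nsmul_eq_mul]
    exact h.sub_le_nsmul hmono hsub hT
  calc f T - f B = (f T - f A) - (f B - f A) := by abel
    _ ≤ (f T - f A) - (f T - f A) / k := sub_le_sub_left hgain _
    _ = (1 - (k : K)⁻¹) * (f T - f A) := by ring

section Real

theorem one_sub_pow_le_exp_neg_mul {x : ℝ} (hx : x ≤ 1) (n : ℕ) :
    (1 - x) ^ n ≤ exp (-(n * x)) :=
  calc (1 - x) ^ n ≤ exp (-x) ^ n :=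
        pow_le_pow_left₀ (sub_nonneg.2 hx) (one_sub_le_exp_neg x) n
    _ = exp (-(n * x)) := by rw [← exp_nat_mul, mul_neg]

variable {ι : Type*} [DecidableEq ι] {f : Finset ι → ℝ} {M : ℕ → Finset ι} {n k : ℕ}

theorem sub_le_one_sub_inv_pow_mul_sub_of_isGreedyStep (hmono : Monotone f) (hsub : IsSubmodular f)
    (hM : ∀ t < n, IsGreedyStep f (M t) (M (t + 1))) (hk : 0 < k) {T : Finset ι} (hT : #T ≤ k) :
    f T - f (M n) ≤ (1 - (k : ℝ)⁻¹) ^ n * (f T - f (M 0)) :=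
  le_geom (u := fun t ↦ f T - f (M t)) (sub_nonneg.2 (Nat.cast_inv_le_one k)) n
    fun t ht ↦ (hM t ht).sub_le_one_sub_inv_mul_sub hmono hsub hk hT

theorem one_sub_exp_mul_le_of_isGreedyStep (hempty : 0 ≤ f ∅) (hmono : Monotone f)
    (hsub : IsSubmodular f) (hM0 : M 0 = ∅) (hM : ∀ t < n, IsGreedyStep f (M t) (M (t + 1)))
    (hk : 0 < k) {T : Finset ι} (hT : #T ≤ k) :
    (1 - exp (-(n / k))) * f T ≤ f (M n) := by
  have hpow : (1 - (k : ℝ)⁻¹) ^ n ≤ exp (-(n / k)) := by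
    simpa only [div_eq_mul_inv] using one_sub_pow_le_exp_neg_mul (Nat.cast_inv_le_one k) n
  have hgap : f T - f (M n) ≤ exp (-(n / k)) * f T :=
    calc f T - f (M n) ≤ (1 - (k : ℝ)⁻¹) ^ n * (f T - f ∅) :=
          hM0 ▸ sub_le_one_sub_inv_pow_mul_sub_of_isGreedyStep hmono hsub hM hk hT
      _ ≤ exp (-(n / k)) * f T :=
          mul_le_mul hpow (sub_le_self _ hempty) (sub_nonneg.2 (hmono (empty_subset T)))
            (exp_pos _).le
  linarith

theorem greedy_one_sub_inv_e_approx_general (hempty : 0 ≤ f ∅) (hmono : Monotone f)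
    (hsub : IsSubmodular f) (hM0 : M 0 = ∅) (hM : ∀ t < n, IsGreedyStep f (M t) (M (t + 1)))
    (hn : 0 < n) (hk : 0 < k) :
    BddAbove {x : ℝ | ∃ T : Finset ι, #T ≤ k ∧ x = f T} ∧
      (1 - exp (-(n / k))) * sSup {x : ℝ | ∃ T : Finset ι, #T ≤ k ∧ x = f T} ≤ f (M n) := by
  have hpos : 0 < 1 - exp (-(n / k : ℝ)) := by
    rw [sub_pos, exp_lt_one_iff, neg_lt_zero]
    positivity
  have hub : f (M n) / (1 - exp (-(n / k))) ∈
      upperBounds {x : ℝ | ∃ T : Finset ι, #T ≤ k ∧ x = f T} := by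
    rintro _ ⟨T, hT, rfl⟩
    exact (le_div_iff₀' hpos).2 (one_sub_exp_mul_le_of_isGreedyStep hempty hmono hsub hM0 hM hk hT)
  exact ⟨⟨_, hub⟩, (le_div_iff₀' hpos).1 (csSup_le ⟨f ∅, ∅, by simp, rfl⟩ hub)⟩

end Real

/-- the greedy algorithm for maximizing a monotone submodular function
under a cardinality constraint `b` achieves a `(1 - 1/e)`-approximation.
The ground set is the finite type `ι`. -/
theorem greedy_one_sub_inv_e_approx
    {ι : Type*} [DecidableEq ι] [Fintype ι] [Nonempty ι]
    (f : Finset ι → ℝ)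
    (hempty : f ∅ = 0)
    (hmono : ∀ A B : Finset ι, A ⊆ B → f A ≤ f B)
    (hsub : ∀ A B : Finset ι, A ⊆ B → ∀ u : ι, u ∉ B →
      f (insert u A) - f A ≥ f (insert u B) - f B)
    (b : ℕ) (hb : 1 ≤ b)
    (M : ℕ → Finset ι) (u : ℕ → ι)
    (hM0 : M 0 = ∅)
    (hgreedy : ∀ t : ℕ, 1 ≤ t → t ≤ b →
      M t = insert (u t) (M (t - 1)) ∧
        ∀ v : ι, f (insert v (M (t - 1))) ≤ f (insert (u t) (M (t - 1)))) :
    f (M b) ≥ (1 - 1 / Real.exp 1) *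
      sSup {x : ℝ | ∃ T : Finset ι, T.card ≤ b ∧ x = f T} := by
  have h := (greedy_one_sub_inv_e_approx_general hempty.ge hmono hsub hM0
    (fun t ht ↦ ⟨u (t + 1), hgreedy (t + 1) t.succ_pos ht⟩) hb hb).2
  rwa [div_self (by positivity), exp_neg, ← one_div] at h
end

section
/- Combined guarantee of greedy supplier selection and discretized price search: let P = [0,1], for each p ∈ P let F(p) be a nonempty finite collection of feasible supplier sets, let f(p,M) ∈ ℝ be the revenue, and let A assign to each p ∈ P a set A(p) ∈ F(p) with f(p, A(p)) ≥ (1 − 1/e) · max{ f(p,M) : M ∈ F(p) } for every p. Suppose g(p) = f(p, A(p)) is β-Lipschitz on [0,1] for some β ≥ 0. For ε ∈ (0,1], let A(ε) = {0, ε, 2ε, …, ⌊1/ε⌋·ε} ∪ {1}, and let p_DS ∈ A(ε) maximize g over A(ε). Then f(p_DS, A(p_DS)) ≥ (1 − 1/e) · sup{ f(p,M) : p ∈ [0,1], M ∈ F(p) } − β·ε. -/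
/-- The uniform grid `A(ε) = {0, ε, 2ε, …, ⌊1/ε⌋·ε} ∪ {1}`. -/
def grid (ε : ℝ) : Set ℝ :=
  {x : ℝ | ∃ k : ℕ, k ≤ ⌊1 / ε⌋₊ ∧ x = (k : ℝ) * ε} ∪ {1}

open Set Metric
open scoped NNReal

theorem grid_subset_Icc {ε : ℝ} (hε : 0 ≤ ε) : grid ε ⊆ Icc 0 1 := by
  rintro _ (⟨k, hk, rfl⟩ | rfl)
  · have hkε : (k : ℝ) ≤ 1 / ε := (Nat.le_floor_iff (by positivity)).mp hk
    exact ⟨by positivity, mul_le_of_le_div₀ zero_le_one hε hkε⟩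
  · exact right_mem_Icc.mpr zero_le_one

theorem isCover_Icc_grid {ε : ℝ≥0} (hε : 0 < ε) : IsCover ε (Icc (0 : ℝ) 1) (grid ε) := by
  intro p ⟨hp₀, hp₁⟩
  have hε' : (0 : ℝ) < ε := hε
  refine ⟨⌊p / ε⌋₊ * ε, Or.inl ⟨_, Nat.floor_le_floor (by gcongr), rfl⟩, ?_⟩
  have hle : ⌊p / ε⌋₊ * (ε : ℝ) ≤ p := (le_div_iff₀ hε').mp (Nat.floor_le (by positivity))
  have hlt : p < (⌊p / ε⌋₊ + 1) * (ε : ℝ) := (div_lt_iff₀ hε').mp (Nat.lt_floor_add_one _)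
  change edist p _ ≤ ε
  rw [edist_le_coe, ← NNReal.coe_le_coe, coe_nndist, Real.dist_eq, abs_of_nonneg (by linarith)]
  linarith

theorem le_add_mul_of_lipschitzOnWith_of_isCover {X : Type*} [PseudoMetricSpace X]
    {s N : Set X} {g : X → ℝ} {K ε : ℝ≥0} {m : ℝ}
    (hg : LipschitzOnWith K g s) (hNs : N ⊆ s) (hN : IsCover ε s N)
    (hm : ∀ x ∈ N, g x ≤ m) {p : X} (hp : p ∈ s) : g p ≤ m + K * ε := by
  obtain ⟨x, hxN, hpx⟩ := hN hp
  have hdist : dist p x ≤ ε := by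
    rw [← coe_nndist, NNReal.coe_le_coe]
    exact edist_le_coe.mp hpx
  calc g p ≤ g x + K * dist p x := hg.le_add_mul hp (hNs hxN)
    _ ≤ m + K * ε := by gcongr; exact hm x hxN

theorem mul_csSup_le {S : Set ℝ} {b c : ℝ} (hc : 0 < c) (hS : S.Nonempty)
    (h : ∀ v ∈ S, c * v ≤ b) : c * sSup S ≤ b :=
  (le_div_iff₀' hc).mp (csSup_le hS fun v hv ↦ (le_div_iff₀' hc).mpr (h v hv))

theorem one_sub_one_div_exp_pos {x : ℝ} (hx : 0 < x) : 0 < 1 - 1 / Real.exp x :=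
  sub_pos.mpr ((div_lt_one (Real.exp_pos x)).mpr (Real.one_lt_exp_iff.mpr hx))

theorem combined_greedy_discretized_search_general {X α : Type*} [PseudoMetricSpace X]
    {P N : Set X} {F : X → Set α} {f : X → α → ℝ} {A : X → α} {c : ℝ} {K ε : ℝ≥0} {q : X}
    (hP : P.Nonempty) (hA : ∀ p ∈ P, A p ∈ F p) (hc : 0 < c)
    (horacle : ∀ p ∈ P, ∀ M ∈ F p, c * f p M ≤ f p (A p))
    (hLip : LipschitzOnWith K (fun p ↦ f p (A p)) P)
    (hNP : N ⊆ P) (hN : IsCover ε P N) (hq : ∀ x ∈ N, f x (A x) ≤ f q (A q)) :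
    c * sSup {v | ∃ p ∈ P, ∃ M ∈ F p, v = f p M} - K * ε ≤ f q (A q) := by
  obtain ⟨p₀, hp₀⟩ := hP
  rw [sub_le_iff_le_add]
  refine mul_csSup_le hc ⟨_, p₀, hp₀, A p₀, hA p₀ hp₀, rfl⟩ ?_
  rintro _ ⟨p, hp, M, hM, rfl⟩
  calc c * f p M ≤ f p (A p) := horacle p hp M hM
    _ ≤ f q (A q) + K * ε := le_add_mul_of_lipschitzOnWith_of_isCover hLip hNP hN hq hp

/-- combined guarantee of the `(1 - 1/e)`-approximate greedy supplier
selection oracle `A` and the discretized price search over the grid `A(ε)`: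
the returned solution is within a factor `(1 - 1/e)` of the jointly optimal revenue,
up to an additive loss `β·ε`. -/
theorem combined_greedy_discretized_search
    {α : Type*}
    (F : ℝ → Finset α) (hF : ∀ p ∈ Set.Icc (0 : ℝ) 1, (F p).Nonempty)
    (f : ℝ → α → ℝ)
    (A : ℝ → α) (hA : ∀ p ∈ Set.Icc (0 : ℝ) 1, A p ∈ F p)
    (horacle : ∀ p ∈ Set.Icc (0 : ℝ) 1, ∀ M ∈ F p,
      f p (A p) ≥ (1 - 1 / Real.exp 1) * f p M)
    (β : ℝ) (hβ : 0 ≤ β)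
    (hLip : ∀ x ∈ Set.Icc (0 : ℝ) 1, ∀ y ∈ Set.Icc (0 : ℝ) 1,
      |f x (A x) - f y (A y)| ≤ β * |x - y|)
    (ε : ℝ) (hε : ε ∈ Set.Ioc (0 : ℝ) 1)
    (pDS : ℝ) (hpDS : pDS ∈ grid ε)
    (hmax : ∀ x ∈ grid ε, f x (A x) ≤ f pDS (A pDS)) :
    f pDS (A pDS) ≥
      (1 - 1 / Real.exp 1) *
        sSup {x : ℝ | ∃ p ∈ Set.Icc (0 : ℝ) 1, ∃ M ∈ F p, x = f p M} - β * ε := by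
  lift β to ℝ≥0 using hβ
  lift ε to ℝ≥0 using hε.1.le
  exact combined_greedy_discretized_search_general (F := fun p ↦ F p)
    (nonempty_Icc.mpr zero_le_one) hA (one_sub_one_div_exp_pos one_pos) horacle
    (.of_dist_le_mul hLip) (grid_subset_Icc ε.coe_nonneg) (isCover_Icc_grid hε.1) hmax
end

section
/- Efficiency of the Shapley value: let N be a finite set with |N| ≥ 1 players and v a real-valued function on subsets of N. Then the Shapley values sum to the total value created by the grand coalition: Σ_{u ∈ N} φ_u(v) = v(N) − v(∅), where φ_u(v) = Σ_{S ⊆ N\{u}} ( |S|!·(|N| − |S| − 1)! / |N|! ) · ( v(S∪{u}) − v(S) ). -/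
/-- The Shapley value of player `u` for the value function `v` on the finite player
set `N` (here the whole finite type `ι`):
`φ_u(v) = Σ_{S ⊆ N\{u}} (|S|!·(|N|−|S|−1)!/|N|!)·(v(S∪{u}) − v(S))`. -/
noncomputable def shapleyValue {ι : Type*} [Fintype ι] [DecidableEq ι]
    (v : Finset ι → ℝ) (u : ι) : ℝ :=
  ∑ S ∈ (Finset.univ.erase u).powerset,
    ((S.card.factorial : ℝ) * ((Fintype.card ι - S.card - 1).factorial : ℝ) /
        ((Fintype.card ι).factorial : ℝ)) *
      (v (insert u S) - v S)

/-!
Split each marginal contribution into `v(S ∪ {u})` and `v(S)`. A nonempty `T` arises as `S ∪ {u}`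
in `|T|` ways, and a proper `S` misses `|N| - |S|` players; against the Shapley weights both counts
become `1 / (|N| choose |T|)`. The two sums are therefore the same binomially weighted sum of `v`
over all coalitions, one without its `∅` term and the other without its `N` term.
-/

open Finset Nat

section DoubleCounting

variable {ι M : Type*} [DecidableEq ι] [AddCommMonoid M]

theorem sum_powerset_erase_eq_sum_sum_sdiff (s : Finset ι) (f : ι → Finset ι → M) :
    ∑ u ∈ s, ∑ S ∈ (s.erase u).powerset, f u S = ∑ S ∈ s.powerset, ∑ u ∈ s \ S, f u S := by
  refine sum_comm' fun u S => ?_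
  simp only [mem_powerset, subset_erase, mem_sdiff]
  tauto

theorem sum_powerset_erase_eq_sum_sum_erase (s : Finset ι) (f : ι → Finset ι → M) :
    ∑ u ∈ s, ∑ S ∈ (s.erase u).powerset, f u S =
      ∑ T ∈ s.powerset, ∑ u ∈ T, f u (T.erase u) := by
  have sum_eq_sum_filter_mem (u : ι) (hu : u ∈ s) :
      ∑ S ∈ (s.erase u).powerset, f u S = ∑ T ∈ s.powerset with u ∈ T, f u (T.erase u) := by
    refine sum_nbij' (insert u) (erase · u) ?_ ?_ ?_ ?_ ?_ <;>
      simp +contextual [subset_erase, insert_subset_iff, hu, insert_erase,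
        (erase_subset _ _).trans]
  rw [sum_congr rfl sum_eq_sum_filter_mem]
  refine sum_comm' fun u T => ?_
  simp only [mem_filter, mem_powerset]
  exact ⟨fun ⟨_, hT, hu⟩ => ⟨hu, hT⟩, fun ⟨hu, hT⟩ => ⟨hT hu, hT, hu⟩⟩

end DoubleCounting

section Weights

variable (K : Type*) [Semifield K]

/-- The coefficient of the marginal contribution of a player to a coalition of size `k`, in the
Shapley value of a game with `n` players. It is meant for `k < n`. -/
def shapleyWeight (n k : ℕ) : K :=
  (k ! : K) * ((n - k - 1)! : K) / (n ! : K)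

variable [CharZero K] {n k : ℕ}

theorem sub_mul_shapleyWeight (h : k < n) :
    ((n - k : ℕ) : K) * shapleyWeight K n k = (n.choose k : K)⁻¹ := by
  rw [shapleyWeight, cast_choose K h.le, inv_div, ← mul_factorial_pred (Nat.sub_ne_zero_of_lt h)]
  push_cast
  ring

theorem succ_mul_shapleyWeight (h : k < n) :
    ((k + 1 : ℕ) : K) * shapleyWeight K n k = (n.choose (k + 1) : K)⁻¹ := by
  rw [shapleyWeight, cast_choose K h, inv_div, factorial_succ, Nat.sub_sub]
  push_cast
  ring

end Weights

section Efficiency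

variable (K : Type*) {ι M : Type*} [DecidableEq ι] [Semifield K] [CharZero K] [AddCommGroup M]
  [Module K M]

theorem sum_shapleyWeight_smul_insert (s : Finset ι) (v : Finset ι → M) :
    ∑ u ∈ s, ∑ S ∈ (s.erase u).powerset, shapleyWeight K #s #S • v (insert u S) =
      ∑ T ∈ s.powerset, ((#s).choose #T : K)⁻¹ • v T - v ∅ := by
  have sum_members (T : Finset ι) (hT : T ∈ s.powerset.erase ∅) :
      ∑ u ∈ T, shapleyWeight K #s #(T.erase u) • v (insert u (T.erase u)) =
        ((#s).choose #T : K)⁻¹ • v T := by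
    obtain ⟨hne, hTs⟩ : T ≠ ∅ ∧ T ⊆ s := by simpa using hT
    obtain ⟨k, hk⟩ := exists_eq_succ_of_ne_zero (mt Finset.card_eq_zero.mp hne)
    have hks : k < #s := succ_le_iff.mp (hk ▸ card_le_card hTs)
    calc ∑ u ∈ T, shapleyWeight K #s #(T.erase u) • v (insert u (T.erase u))
        = ∑ _u ∈ T, shapleyWeight K #s k • v T :=
          sum_congr rfl fun u hu => by rw [card_erase_of_mem hu, insert_erase hu, hk, succ_sub_one]
      _ = ((#s).choose #T : K)⁻¹ • v T := by
          rw [sum_const, ← Nat.cast_smul_eq_nsmul K, smul_smul, hk, succ_mul_shapleyWeight K hks]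
  calc ∑ u ∈ s, ∑ S ∈ (s.erase u).powerset, shapleyWeight K #s #S • v (insert u S)
      = ∑ T ∈ s.powerset, ∑ u ∈ T, shapleyWeight K #s #(T.erase u) • v (insert u (T.erase u)) :=
        sum_powerset_erase_eq_sum_sum_erase s _
    _ = ∑ T ∈ s.powerset.erase ∅, ((#s).choose #T : K)⁻¹ • v T := by
        rw [← sum_congr rfl sum_members]
        exact (sum_erase _ (by rw [sum_empty])).symm
    _ = ∑ T ∈ s.powerset, ((#s).choose #T : K)⁻¹ • v T - v ∅ := by
        rw [sum_erase_eq_sub (empty_mem_powerset s), card_empty, choose_zero_right, cast_one,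
          inv_one, one_smul]

theorem sum_shapleyWeight_smul (s : Finset ι) (v : Finset ι → M) :
    ∑ u ∈ s, ∑ S ∈ (s.erase u).powerset, shapleyWeight K #s #S • v S =
      ∑ S ∈ s.powerset, ((#s).choose #S : K)⁻¹ • v S - v s := by
  have sum_nonmembers (S : Finset ι) (hS : S ∈ s.powerset.erase s) :
      ∑ _u ∈ s \ S, shapleyWeight K #s #S • v S = ((#s).choose #S : K)⁻¹ • v S := by
    have hSs : S ⊂ s := mem_ssubsets.mp hS
    rw [sum_const, card_sdiff_of_subset hSs.subset, ← Nat.cast_smul_eq_nsmul K, smul_smul,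
      sub_mul_shapleyWeight K (card_lt_card hSs)]
  calc ∑ u ∈ s, ∑ S ∈ (s.erase u).powerset, shapleyWeight K #s #S • v S
      = ∑ S ∈ s.powerset, ∑ _u ∈ s \ S, shapleyWeight K #s #S • v S :=
        sum_powerset_erase_eq_sum_sum_sdiff s _
    _ = ∑ S ∈ s.powerset.erase s, ((#s).choose #S : K)⁻¹ • v S := by
        rw [← sum_congr rfl sum_nonmembers]
        exact (sum_erase _ (by rw [Finset.sdiff_self, sum_empty])).symm
    _ = ∑ S ∈ s.powerset, ((#s).choose #S : K)⁻¹ • v S - v s := by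
        rw [sum_erase_eq_sub (mem_powerset_self s), choose_self, cast_one, inv_one, one_smul]

theorem shapley_efficiency_general (s : Finset ι) (v : Finset ι → M) :
    ∑ u ∈ s, ∑ S ∈ (s.erase u).powerset, shapleyWeight K #s #S • (v (insert u S) - v S) =
      v s - v ∅ := by
  simp only [smul_sub, sum_sub_distrib]
  rw [sum_shapleyWeight_smul_insert, sum_shapleyWeight_smul, sub_sub_sub_cancel_left]

end Efficiency

/-- efficiency of the Shapley value: the Shapley values of all players
sum to `v(N) − v(∅)`. -/
theorem shapley_efficiency
    {ι : Type*} [Fintype ι] [DecidableEq ι]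
    (hcard : 1 ≤ Fintype.card ι) (v : Finset ι → ℝ) :
    ∑ u : ι, shapleyValue v u = v Finset.univ - v ∅ := by
  exact shapley_efficiency_general ℝ univ v
end

section
/- Concentration of the sampling estimator of the Shapley value: let N be a finite set with n = |N| ≥ 1 players, let v be a real-valued function on subsets of N, fix u ∈ N, and suppose that for every ordering σ of N the marginal contribution X(σ) = v(P_σ(u) ∪ {u}) − v(P_σ(u)) satisfies 0 ≤ X(σ) ≤ c for some constant c > 0. Let σ_1, …, σ_K be K independent orderings of N, each drawn uniformly at random from all n! orderings, and let φ̂_u = (1/K) Σ_{k=1}^K X(σ_k). Then for every δ ∈ (0,1], with probability at least 1 − δ, | φ̂_u − φ_u(v) | ≤ c · sqrt( (1/(2K)) · ln(2/δ) ), where φ_u(v) = Σ_{S ⊆ N\{u}} ( |S|!·(n − |S| − 1)! / n! ) · ( v(S∪{u}) − v(S) ) is the Shapley value of u. -/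
/-- `predsIn σ u` : the set of players that precede `u` in the ordering `σ` of the
players, where an ordering of the `n` players is a bijection `Fin n ≃ ι`. -/
def predsIn {ι : Type*} [Fintype ι] [DecidableEq ι] {n : ℕ} (σ : Fin n ≃ ι) (u : ι) :
    Finset ι :=
  Finset.univ.filter (fun w => σ.symm w < σ.symm u)

/-- The marginal contribution of `u` in the ordering `σ`:
`X(σ) = v(P_σ(u) ∪ {u}) − v(P_σ(u))`. -/
def marginal {ι : Type*} [Fintype ι] [DecidableEq ι] {n : ℕ}
    (v : Finset ι → ℝ) (u : ι) (σ : Fin n ≃ ι) : ℝ :=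
  v (insert u (predsIn σ u)) - v (predsIn σ u)

/-!
A uniformly random ordering has mean marginal contribution `φ_u(v)`: among the `|S|!·(n − |S|)!`
orderings that begin with the players of `S`, exchanging two players outside `S` shows that each of
the `n − |S|` players outside `S` comes right after `S` equally often, so `P_σ(u) = S` for
`|S|!·(n − |S| − 1)!` orderings. By Hoeffding's lemma `X(σ) − φ_u(v)` is sub-Gaussian with variance
proxy `c²/4`, hence the mean of `K` independent copies has proxy `c²/(4K)`, and a two-sided Chernoff
bound at the radius where `2·exp(−2Kt²/c²) = δ` gives the claim.
-/

open Finset MeasureTheory ProbabilityTheory Real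
open scoped BigOperators Nat NNReal

section SubGaussian

variable {Ω : Type*} {mΩ : MeasurableSpace Ω} {μ : Measure Ω} {c : ℝ≥0}

lemma measureReal_abs_ge_le_of_hasSubgaussianMGF {X : Ω → ℝ} (h : HasSubgaussianMGF X c μ)
    {ε : ℝ} (hε : 0 ≤ ε) :
    μ.real {ω | ε ≤ |X ω|} ≤ 2 * exp (-ε ^ 2 / (2 * c)) := by
  calc μ.real {ω | ε ≤ |X ω|}
      = μ.real ({ω | ε ≤ X ω} ∪ {ω | ε ≤ (-X) ω}) := by
        congr 1
        ext ω
        exact le_abs (a := ε)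
    _ ≤ μ.real {ω | ε ≤ X ω} + μ.real {ω | ε ≤ (-X) ω} := measureReal_union_le _ _
    _ ≤ 2 * exp (-ε ^ 2 / (2 * c)) := by
        rw [two_mul]
        exact add_le_add (h.measure_ge_le hε) (h.neg.measure_ge_le hε)

lemma measureReal_sqrt_log_lt_abs_le_of_hasSubgaussianMGF [IsFiniteMeasure μ] {X : Ω → ℝ}
    (h : HasSubgaussianMGF X c μ) {δ : ℝ} (hδ : δ ∈ Set.Ioc 0 1) :
    μ.real {ω | √(2 * c * log (2 / δ)) < |X ω|} ≤ δ := by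
  obtain ⟨hδ0, hδ1⟩ := hδ
  have hlog : 0 ≤ log (2 / δ) := log_nonneg (by rw [le_div_iff₀ hδ0]; linarith)
  -- For `c = 0` the tail bound is the trivial `2 * exp (-ε ^ 2 / 0) = 2`, but then `X = 0` a.e.
  obtain rfl | hc := eq_zero_or_pos c
  · have hX : ∀ᵐ ω ∂μ, X ω = 0 := h.ae_eq_zero_of_hasSubgaussianMGF_zero
    have hnull : μ.real {ω | X ω ≠ 0} = 0 := by
      rw [measureReal_eq_zero_iff]
      exact ae_iff.1 hX
    simpa [hnull] using hδ0.le
  set t := √(2 * c * log (2 / δ)) with ht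
  calc μ.real {ω | t < |X ω|}
      ≤ μ.real {ω | t ≤ |X ω|} := measureReal_mono fun ω (hω : t < |X ω|) ↦ hω.le
    _ ≤ 2 * exp (-t ^ 2 / (2 * c)) := measureReal_abs_ge_le_of_hasSubgaussianMGF h (by positivity)
    _ = 2 * exp (-log (2 / δ)) := by
        rw [ht, sq_sqrt (by positivity)]
        field_simp
    _ = δ := by
        rw [exp_neg, exp_log (by positivity)]
        field_simp

lemma one_sub_le_measureReal_abs_le_of_hasSubgaussianMGF [IsProbabilityMeasure μ] {X : Ω → ℝ}
    (h : HasSubgaussianMGF X c μ) {δ : ℝ} (hδ : δ ∈ Set.Ioc 0 1) :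
    1 - δ ≤ μ.real {ω | |X ω| ≤ √(2 * c * log (2 / δ))} := by
  set t := √(2 * c * log (2 / δ))
  have hcover : {ω | |X ω| ≤ t} ∪ {ω | t < |X ω|} = Set.univ := by
    ext ω
    simp [le_or_gt]
  have hunion := measureReal_union_le (μ := μ) {ω | |X ω| ≤ t} {ω | t < |X ω|}
  rw [hcover, probReal_univ] at hunion
  linarith [measureReal_sqrt_log_lt_abs_le_of_hasSubgaussianMGF h hδ]

lemma hasSubgaussianMGF_expect {κ : Type*} [Fintype κ] {X : κ → Ω → ℝ} (hindep : iIndepFun X μ)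
    (h : ∀ k, HasSubgaussianMGF (X k) c μ) :
    HasSubgaussianMGF (fun ω ↦ 𝔼 k, X k ω) (c / Fintype.card κ) μ := by
  have hsum := (HasSubgaussianMGF.sum_of_iIndepFun hindep (s := univ) fun k _ ↦ h k).const_mul
    (Fintype.card κ : ℝ)⁻¹
  convert hsum using 1
  · ext ω
    rw [Fintype.expect_eq_sum_div_card, div_eq_inv_mul]
  · ext
    simp only [sum_const, card_univ, nsmul_eq_mul]
    change (c / Fintype.card κ : ℝ) = (Fintype.card κ : ℝ)⁻¹ ^ 2 * (Fintype.card κ * c)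
    field_simp

end SubGaussian

section Sampling

variable {α κ : Type*} [Fintype κ] [Nonempty κ]

lemma hasSubgaussianMGF_expect_sub_integral_pi [MeasurableSpace α] {μ : Measure α}
    [IsProbabilityMeasure μ] {f : α → ℝ} {a b : ℝ} (hfm : AEMeasurable f μ)
    (hf : ∀ᵐ x ∂μ, f x ∈ Set.Icc a b) :
    HasSubgaussianMGF (fun ω : κ → α ↦ 𝔼 k, f (ω k) - ∫ x, f x ∂μ)
      ((‖b - a‖₊ / 2) ^ 2 / Fintype.card κ) (Measure.pi fun _ ↦ μ) := by
  set g : α → ℝ := fun x ↦ f x - ∫ x, f x ∂μ with hg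
  have hindep : iIndepFun (fun (k : κ) ω ↦ g (ω k)) (Measure.pi fun _ ↦ μ) :=
    iIndepFun_pi (X := fun _ ↦ g) fun _ ↦ hfm.sub_const _
  have hcoord (k : κ) : HasSubgaussianMGF (fun ω : κ → α ↦ g (ω k)) ((‖b - a‖₊ / 2) ^ 2)
      (Measure.pi fun _ ↦ μ) := by
    refine .of_map (X := g) (measurable_pi_apply k).aemeasurable ?_
    rw [(measurePreserving_eval (fun _ : κ ↦ μ) k).map_eq]
    exact hasSubgaussianMGF_of_mem_Icc hfm hf
  simpa [hg, expect_sub_distrib] using hasSubgaussianMGF_expect hindep hcoord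

variable [Fintype α]

lemma measureReal_uniformOn_univ [MeasurableSpace α] [MeasurableSingletonClass α] (s : Set α) :
    (uniformOn Set.univ : Measure α).real s = s.ncard / Fintype.card α := by
  rw [measureReal_def, uniformOn_univ, Measure.count_apply s.toFinite.measurableSet,
    ← s.toFinite.cast_ncard_eq, ENat.toENNReal_coe, ENNReal.toReal_div, ENNReal.toReal_natCast,
    ENNReal.toReal_natCast]

lemma integral_uniformOn_univ [MeasurableSpace α] [MeasurableSingletonClass α] (f : α → ℝ) :
    ∫ x, f x ∂(uniformOn Set.univ) = 𝔼 x, f x := by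
  rw [integral_fintype .of_finite, Fintype.expect_eq_sum_div_card, sum_div]
  simp [measureReal_uniformOn_univ, div_eq_inv_mul]

lemma one_sub_mul_card_le_ncard_abs_expect_sub_expect_le [DecidableEq κ] [Nonempty α]
    {f : α → ℝ} {a b : ℝ} (hf : ∀ x, f x ∈ Set.Icc a b) {δ : ℝ} (hδ : δ ∈ Set.Ioc 0 1) :
    (1 - δ) * Fintype.card (κ → α) ≤
      {ω : κ → α | |𝔼 k, f (ω k) - 𝔼 x, f x| ≤
        (b - a) * √(1 / (2 * Fintype.card κ) * log (2 / δ))}.ncard := by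
  let : MeasurableSpace α := ⊤
  have : DiscreteMeasurableSpace α := ⟨fun _ ↦ trivial⟩
  have hab : 0 ≤ b - a := sub_nonneg.2 ((hf (Classical.arbitrary α)).1.trans (hf _).2)
  have hsub := hasSubgaussianMGF_expect_sub_integral_pi (κ := κ) (μ := uniformOn Set.univ)
    .of_discrete (ae_of_all _ hf)
  rw [integral_uniformOn_univ, ← uniformOn_pi, Set.pi_univ] at hsub
  have hwidth : √(2 * ((‖b - a‖₊ / 2) ^ 2 / Fintype.card κ : ℝ≥0) * log (2 / δ)) =
      (b - a) * √(1 / (2 * Fintype.card κ) * log (2 / δ)) := by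
    rw [← sqrt_sq hab, ← sqrt_mul (sq_nonneg _), sqrt_sq hab]
    congr 1
    push_cast
    rw [norm_of_nonneg hab]
    ring
  have hprob := one_sub_le_measureReal_abs_le_of_hasSubgaussianMGF hsub hδ
  rwa [hwidth, measureReal_uniformOn_univ, le_div_iff₀ (by positivity)] at hprob

end Sampling

section Orderings

variable {ι : Type*} [Fintype ι] [DecidableEq ι] {n : ℕ}

lemma notMem_predsIn (σ : Fin n ≃ ι) (u : ι) : u ∉ predsIn σ u := by
  simp [predsIn]

lemma card_predsIn (σ : Fin n ≃ ι) (u : ι) : #(predsIn σ u) = σ.symm u := by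
  have h : predsIn σ u = (Iio (σ.symm u)).map σ.toEmbedding := by
    ext w
    simp [predsIn, mem_map_equiv]
  rw [h, card_map, Fin.card_Iio]

lemma predsIn_trans {κ : Type*} [Fintype κ] [DecidableEq κ] (σ : Fin n ≃ ι) (e : ι ≃ κ) (u : ι) :
    predsIn (σ.trans e) (e u) = (predsIn σ u).map e.toEmbedding := by
  ext w
  simp [predsIn, mem_map_equiv]

lemma card_filter_predsIn_eq_congr {u w : ι} {S : Finset ι} (hu : u ∉ S) (hw : w ∉ S) :
    #{σ : Fin n ≃ ι | predsIn σ u = S} = #{σ : Fin n ≃ ι | predsIn σ w = S} := by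
  have hS : S.map (Equiv.swap u w).toEmbedding = S := by
    ext x
    rw [mem_map_equiv, Equiv.symm_swap]
    grind
  refine card_equiv ((Equiv.refl _).equivCongr (Equiv.swap u w)) fun σ ↦ ?_
  have hσ : predsIn (σ.trans (Equiv.swap u w)) w =
      (predsIn σ u).map (Equiv.swap u w).toEmbedding := by
    rw [← predsIn_trans, Equiv.swap_apply_left]
  change _ ↔ σ.trans (Equiv.swap u w) ∈ _
  rw [mem_filter_univ, mem_filter_univ, hσ]
  nth_rw 2 [← hS]
  rw [map_inj]

lemma predsIn_eq_iff_isPrefix (σ : Fin (Fintype.card ι) ≃ ι) (u : ι) (S : Finset ι) :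
    predsIn σ u = S ↔ Numbering.IsPrefix σ.symm S ∧ (σ.symm u : ℕ) = #S := by
  constructor
  · rintro rfl
    exact ⟨fun x ↦ by rw [card_predsIn]; simp [predsIn], (card_predsIn σ u).symm⟩
  · rintro ⟨hS, hu⟩
    ext x
    rw [hS x, ← hu]
    simp [predsIn]

lemma sum_compl_card_filter_predsIn_eq {S : Finset ι} (hS : #S < Fintype.card ι) :
    ∑ u ∈ Sᶜ, #{σ : Fin (Fintype.card ι) ≃ ι | predsIn σ u = S} =
      (#S)! * (Fintype.card ι - #S)! := by
  let nextPlayer (σ : Fin (Fintype.card ι) ≃ ι) : ι := σ ⟨#S, hS⟩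
  have hnext (σ : Fin (Fintype.card ι) ≃ ι) (u : ι) : nextPlayer σ = u ↔ (σ.symm u : ℕ) = #S := by
    rw [← Equiv.eq_symm_apply, Fin.ext_iff, eq_comm]
  have hmaps : ∀ σ ∈ ({σ | Numbering.IsPrefix σ.symm S} : Finset (Fin (Fintype.card ι) ≃ ι)),
      nextPlayer σ ∈ Sᶜ := fun σ hσ ↦ by
    rw [mem_compl, (mem_filter.1 hσ).2, Equiv.symm_apply_apply]
    exact lt_irrefl _
  calc ∑ u ∈ Sᶜ, #{σ : Fin (Fintype.card ι) ≃ ι | predsIn σ u = S}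
      = #{σ : Fin (Fintype.card ι) ≃ ι | Numbering.IsPrefix σ.symm S} := by
        rw [card_eq_sum_card_fiberwise hmaps]
        simp only [predsIn_eq_iff_isPrefix, hnext, filter_filter]
    _ = #(Numbering.prefixed S) :=
        card_equiv (Equiv.symmEquiv _ _) fun σ ↦ by simp [Equiv.symmEquiv]
    _ = (#S)! * (Fintype.card ι - #S)! := Numbering.card_prefixed S

lemma card_filter_predsIn_eq {u : ι} {S : Finset ι} (hu : u ∉ S) :
    #{σ : Fin (Fintype.card ι) ≃ ι | predsIn σ u = S} =
      (#S)! * (Fintype.card ι - #S - 1)! := by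
  have hS : #S < Fintype.card ι := card_lt_univ_of_notMem hu
  have hpos : 0 < Fintype.card ι - #S := Nat.sub_pos_of_lt hS
  refine Nat.eq_of_mul_eq_mul_left hpos ?_
  calc (Fintype.card ι - #S) * #{σ : Fin (Fintype.card ι) ≃ ι | predsIn σ u = S}
      = ∑ w ∈ Sᶜ, #{σ : Fin (Fintype.card ι) ≃ ι | predsIn σ w = S} := by
        rw [sum_congr rfl fun w hw ↦ card_filter_predsIn_eq_congr (mem_compl.1 hw) hu, sum_const,
          card_compl, smul_eq_mul]
    _ = (#S)! * (Fintype.card ι - #S)! := sum_compl_card_filter_predsIn_eq hS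
    _ = (Fintype.card ι - #S) * ((#S)! * (Fintype.card ι - #S - 1)!) := by
        rw [← Nat.mul_factorial_pred hpos.ne']
        ring

lemma expect_marginal (v : Finset ι → ℝ) (u : ι) :
    𝔼 σ : Fin (Fintype.card ι) ≃ ι, marginal v u σ = shapleyValue v u := by
  have hmaps (σ : Fin (Fintype.card ι) ≃ ι) (_ : σ ∈ univ) :
      predsIn σ u ∈ (univ.erase u).powerset :=
    mem_powerset.2 (subset_erase.2 ⟨subset_univ _, notMem_predsIn σ u⟩)
  rw [Fintype.expect_eq_sum_div_card, ← sum_fiberwise_of_maps_to hmaps, shapleyValue, sum_div]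
  refine sum_congr rfl fun S hS ↦ ?_
  have hu : u ∉ S := (subset_erase.1 (mem_powerset.1 hS)).2
  have hfiber : ∑ σ : Fin (Fintype.card ι) ≃ ι with predsIn σ u = S, marginal v u σ =
      #{σ : Fin (Fintype.card ι) ≃ ι | predsIn σ u = S} * (v (insert u S) - v S) := by
    rw [← nsmul_eq_mul]
    refine sum_eq_card_nsmul fun σ hσ ↦ ?_
    rw [marginal, (mem_filter.1 hσ).2]
  rw [hfiber, card_filter_predsIn_eq hu, Fintype.card_equiv (Fintype.equivFin ι).symm,
    Fintype.card_fin]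
  push_cast
  ring

end Orderings

theorem shapley_sampling_concentration_general {ι : Type*} [Fintype ι] [DecidableEq ι]
    (n : ℕ) (hn : n = Fintype.card ι) (v : Finset ι → ℝ) (u : ι) (a b : ℝ)
    (hX : ∀ σ : Fin n ≃ ι, marginal v u σ ∈ Set.Icc a b)
    (K : ℕ) (hK : 1 ≤ K) (δ : ℝ) (hδ : δ ∈ Set.Ioc (0 : ℝ) 1) :
    (1 - δ) * (Fintype.card (Fin K → (Fin n ≃ ι)) : ℝ) ≤
      {ω : Fin K → (Fin n ≃ ι) |
        |(1 / (K : ℝ)) * (∑ k, marginal v u (ω k)) - shapleyValue v u| ≤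
          (b - a) * √(1 / (2 * (K : ℝ)) * log (2 / δ))}.ncard := by
  subst hn
  have : NeZero K := ⟨Nat.one_le_iff_ne_zero.1 hK⟩
  have : Nonempty (Fin (Fintype.card ι) ≃ ι) := ⟨(Fintype.equivFin ι).symm⟩
  have h := one_sub_mul_card_le_ncard_abs_expect_sub_expect_le (κ := Fin K) hX hδ
  rw [expect_marginal] at h
  simpa only [Fintype.expect_eq_sum_div_card, Fintype.card_fin, one_div_mul_eq_div] using h

/-- concentration of the sampling estimator of the Shapley value: if all
marginal contributions lie in `[0,c]` and `φ̂_u` is the average of the marginal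
contribution over `K` independent uniformly random orderings (modelled by the uniform
distribution on `K`-tuples of orderings, i.e. by counting), then with probability at
least `1 − δ`, `|φ̂_u − φ_u(v)| ≤ c·sqrt((1/(2K))·ln(2/δ))`. -/
theorem shapley_sampling_concentration
    {ι : Type*} [Fintype ι] [DecidableEq ι]
    (n : ℕ) (hn : n = Fintype.card ι) (hn1 : 1 ≤ n)
    (v : Finset ι → ℝ) (u : ι) (c : ℝ) (hc : 0 < c)
    (hX : ∀ σ : Fin n ≃ ι, 0 ≤ marginal v u σ ∧ marginal v u σ ≤ c)
    (K : ℕ) (hK : 1 ≤ K) (δ : ℝ) (hδ : δ ∈ Set.Ioc (0 : ℝ) 1) :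
    (({ω : Fin K → (Fin n ≃ ι) |
        |(1 / (K : ℝ)) * (∑ k : Fin K, marginal v u (ω k)) - shapleyValue v u| ≤
          c * Real.sqrt ((1 / (2 * (K : ℝ))) * Real.log (2 / δ))} : Set _).ncard : ℝ)
      ≥ (1 - δ) * (Fintype.card (Fin K → (Fin n ≃ ι)) : ℝ) := by
  simpa using shapley_sampling_concentration_general n hn v u 0 c hX K hK δ hδ
end
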